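/- Let d ≥ 2 and λ ∈ [0,1). Define F : Δ → ℝ by F(x) = ½‖x − λe₂‖² − λ log(1 + √(1 − x₁²)) + λ√(1 − x₁²) + (λ−1) log x₁, and let T x = (x₁/‖x‖) e₁ + ((1 − 1/‖x‖) x₂ + λ) e₂ + (1 − 1/‖x‖) ∑_{j=3}^d x_j e_j. Then F(T x) ≤ F(x) for every x ∈ Δ (note T x ∈ Δ whenever x ∈ Δ). -/

import Mathlib

noncomputable section

open Metric Set Filter

/-- Euclidean space `ℝ^d` with `d = d' + 2 ≥ 2`. -/
abbrev Euc (d : ℕ) := EuclideanSpace ℝ (Fin (d + 2))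

/-- The standard basis vectors. -/
def e (d : ℕ) (j : Fin (d + 2)) : Euc d := EuclideanSpace.single j 1

/-- The Douglas–Rachford operator for the unit sphere and the line
`L_λ = {t e₁ + λ e₂}`, given by its explicit formula
`T x = (x₁/‖x‖) e₁ + ((1 − 1/‖x‖) x₂ + λ) e₂ + (1 − 1/‖x‖) ∑_{j=3}^d x_j e_j`. -/
def DR (d : ℕ) (lam : ℝ) (x : Euc d) : Euc d :=
  (x 0 / ‖x‖) • e d 0 + ((1 - 1 / ‖x‖) * x 1 + lam) • e d 1 +
    ∑ j ∈ Finset.univ.filter (fun j : Fin (d + 2) => 2 ≤ (j : ℕ)),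
      ((1 - 1 / ‖x‖) * x j) • e d j

/-- The Lyapunov-type function of Benoist:
`F(x) = ½‖x − λe₂‖² − λ log(1 + √(1 − x₁²)) + λ√(1 − x₁²) + (λ−1) log x₁`. -/
def F (d : ℕ) (lam : ℝ) (x : Euc d) : ℝ :=
  (1 / 2) * ‖x - lam • e d 1‖ ^ 2 - lam * Real.log (1 + Real.sqrt (1 - (x 0) ^ 2)) +
    lam * Real.sqrt (1 - (x 0) ^ 2) + (lam - 1) * Real.log (x 0)

/-- `Δ = {x : 0 < x₁ ≤ 1}`. -/
def Delta (d : ℕ) : Set (Euc d) := {x | 0 < x 0 ∧ x 0 ≤ 1}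

/-!
`F x` is half the squared distance of `x` to the line `L_λ` plus a function `f` of `x₁` alone. For
`x` in the half-plane `ℝ e₁ + ℝ≥0 e₂` the gradient of `F` at `T x` is orthogonal to `x - T x`, and
this is the worst case for given `x₁` and `‖x‖`. Hence `F x - F (T x)` is at least `½ (λ - c)²` plus
the Bregman divergence of `f` from `u = (T x)₁` to `s = x₁`, where `c = √(1 - u²)`.

The function `f` is convex on an interval `(0, p]` and concave on `[p, 1]`. If `u ≤ p`, the Bregman
divergence is nonnegative for `s ≤ p` and at least the minimum of `0` and its value at `s = 1`
for `s ≥ p`, so the worst case is `s = 1`, where the bound is a quadratic polynomial in `λ`. If `u`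
is in the concave region, `λ - c ≥ c u²` is so large that crude bounds on the derivative of `f`
make the square dominate.
-/

section Convexity

variable {S : Set ℝ} {f : ℝ → ℝ} {f' u s : ℝ}

lemma add_mul_sub_le_of_convexOn (hf : ConvexOn ℝ S f) (hu : u ∈ S) (hs : s ∈ S)
    (hf' : HasDerivAt f f' u) : f u + f' * (s - u) ≤ f s := by
  rcases lt_trichotomy s u with hsu | rfl | hus
  · have h := hf.slope_le_of_hasDerivAt hs hu hsu hf'
    rw [slope_def_field, div_le_iff₀ (sub_pos.2 hsu)] at h
    linarith
  · simp
  · have h := hf.le_slope_of_hasDerivAt hu hs hus hf'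
    rw [slope_def_field, le_div_iff₀ (sub_pos.2 hus)] at h
    linarith

lemma min_zero_le_of_convexOn_of_concaveOn {p b : ℝ} (hconv : ConvexOn ℝ S f)
    (hconc : ConcaveOn ℝ (Icc p b) f) (hp : p ∈ S) (hu : u ∈ S) (hf' : HasDerivAt f f' u)
    (hs : s ∈ Icc p b) :
    min 0 (f b - f u - f' * (b - u)) ≤ f s - f u - f' * (s - u) := by
  have hpb : p ≤ b := hs.1.trans hs.2
  have hlin : ConvexOn ℝ (Icc p b) fun x ↦ f u + f' * (x - u) :=
    ⟨convex_Icc p b, fun x _ y _ α β _ _ hαβ ↦ le_of_eq <| by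
      simp only [smul_eq_mul]
      linear_combination (f' * u - f u) * hαβ⟩
  have hmin := (hconc.sub hlin).min_le_of_mem_Icc (left_mem_Icc.2 hpb) (right_mem_Icc.2 hpb) hs
  simp only [Pi.sub_apply, ← sub_sub] at hmin
  refine (min_le_min_right _ ?_).trans hmin
  linarith [add_mul_sub_le_of_convexOn hconv hu hp hf']

end Convexity

/-- The dependence of `F` on the coordinate `s = x₁`:
`F x = ½ (‖x - λ e₂‖² - x₁²) + axialPart λ x₁`. -/
def axialPart (lam s : ℝ) : ℝ :=
  s ^ 2 / 2 - lam * Real.log (1 + √(1 - s ^ 2)) + lam * √(1 - s ^ 2) + (lam - 1) * Real.log s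

/-- The derivative of `axialPart` on `(0, 1)`. -/
def axialSlope (lam s : ℝ) : ℝ := √(1 - s ^ 2) * (lam - √(1 - s ^ 2)) / s

/-- The lower bound for `F x - F (T x)` in terms of `s = x₁` and `u = (T x)₁`, an equality when `x`
lies in the half-plane `ℝ e₁ + ℝ≥0 e₂`: there `∇F (T x)` is orthogonal to `x - T x`, so `F` grows
along the step by half the square of its `e₂`-component plus the Bregman divergence of
`axialPart`. -/
def descentGap (lam u s : ℝ) : ℝ :=
  (lam - √(1 - u ^ 2)) ^ 2 / 2 + (axialPart lam s - axialPart lam u - axialSlope lam u * (s - u))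

section AxialPart

variable {lam u s : ℝ}

lemma one_sub_sq_pos (hs : s ∈ Ioo 0 1) : 0 < 1 - s ^ 2 := by nlinarith [hs.1, hs.2]

lemma one_sub_sq_nonneg (hs : s ∈ Ioc 0 1) : 0 ≤ 1 - s ^ 2 := by nlinarith [hs.1, hs.2]

lemma sqrt_one_sub_sq_lt_one (hu : 0 < u) : √(1 - u ^ 2) < 1 :=
  (Real.sqrt_lt' one_pos).2 (by nlinarith)

lemma sqrt_one_sub_sq_anti (hu : 0 ≤ u) (hus : u ≤ s) : √(1 - s ^ 2) ≤ √(1 - u ^ 2) := by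
  gcongr

lemma hasDerivAt_sqrt_one_sub_sq (hs : s ∈ Ioo 0 1) :
    HasDerivAt (fun t ↦ √(1 - t ^ 2)) (-s / √(1 - s ^ 2)) s := by
  refine (((hasDerivAt_pow 2 s).const_sub 1).sqrt (one_sub_sq_pos hs).ne').congr_deriv ?_
  field_simp
  simp

lemma hasDerivAt_axialPart (lam : ℝ) (hs : s ∈ Ioo 0 1) :
    HasDerivAt (axialPart lam) (axialSlope lam s) s := by
  have hsqrt := hasDerivAt_sqrt_one_sub_sq hs
  have hpos : 0 < √(1 - s ^ 2) := Real.sqrt_pos.2 (one_sub_sq_pos hs)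
  have hsq := Real.sq_sqrt (one_sub_sq_pos hs).le
  have hs0 := hs.1.ne'
  have hderiv := ((((hasDerivAt_pow 2 s).div_const 2).sub
    (((hsqrt.const_add 1).log (by positivity)).const_mul lam)).add (hsqrt.const_mul lam)).add
    ((Real.hasDerivAt_log hs0).const_mul (lam - 1))
  refine hderiv.congr_deriv ?_
  unfold axialSlope
  generalize √(1 - s ^ 2) = w at *
  field_simp
  linear_combination 2 * w * (1 + w - lam) * hsq

lemma hasDerivAt_axialSlope (lam : ℝ) (hs : s ∈ Ioo 0 1) :
    HasDerivAt (axialSlope lam)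
      ((√(1 - s ^ 2) * (1 + s ^ 2) - lam) / (√(1 - s ^ 2) * s ^ 2)) s := by
  have hsqrt := hasDerivAt_sqrt_one_sub_sq hs
  have hpos : 0 < √(1 - s ^ 2) := Real.sqrt_pos.2 (one_sub_sq_pos hs)
  have hsq := Real.sq_sqrt (one_sub_sq_pos hs).le
  have hs0 := hs.1.ne'
  refine ((hsqrt.mul (hsqrt.const_sub lam)).div (hasDerivAt_id s) hs0).congr_deriv ?_
  simp only [Pi.mul_apply, id_eq]
  generalize √(1 - s ^ 2) = w at *
  field_simp
  linear_combination (w - lam) * hsq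

lemma continuousOn_axialPart (lam : ℝ) : ContinuousOn (axialPart lam) (Ioi 0) := by
  unfold axialPart
  refine ContinuousOn.add (Continuous.continuousOn ?_)
    ((Real.continuousOn_log.mono fun s hs ↦ (mem_Ioi.1 hs).ne').const_mul _)
  have hlog : Continuous fun s : ℝ ↦ Real.log (1 + √(1 - s ^ 2)) :=
    Continuous.log (by fun_prop) fun s ↦ by positivity
  fun_prop

lemma convexOn_axialPart {p : ℝ} (hp : p ≤ 1)
    (h : ∀ s ∈ Ioo 0 p, lam ≤ √(1 - s ^ 2) * (1 + s ^ 2)) :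
    ConvexOn ℝ (Ioc 0 p) (axialPart lam) := by
  have hmem : ∀ s ∈ interior (Ioc 0 p), s ∈ Ioo 0 1 := fun s hs ↦ by
    rw [interior_Ioc] at hs
    exact ⟨hs.1, hs.2.trans_le hp⟩
  refine convexOn_of_hasDerivWithinAt2_nonneg (convex_Ioc 0 p)
    ((continuousOn_axialPart lam).mono Ioc_subset_Ioi_self)
    (fun s hs ↦ (hasDerivAt_axialPart lam (hmem s hs)).hasDerivWithinAt)
    (fun s hs ↦ (hasDerivAt_axialSlope lam (hmem s hs)).hasDerivWithinAt) fun s hs ↦ ?_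
  rw [interior_Ioc] at hs
  exact div_nonneg (sub_nonneg.2 (h s hs)) (by positivity)

lemma concaveOn_axialPart {p : ℝ} (hp : 0 < p)
    (h : ∀ s ∈ Ioo p 1, √(1 - s ^ 2) * (1 + s ^ 2) ≤ lam) :
    ConcaveOn ℝ (Icc p 1) (axialPart lam) := by
  have hmem : ∀ s ∈ interior (Icc p 1), s ∈ Ioo 0 1 := fun s hs ↦ by
    rw [interior_Icc] at hs
    exact ⟨hp.trans hs.1, hs.2⟩
  refine concaveOn_of_hasDerivWithinAt2_nonpos (convex_Icc p 1)
    ((continuousOn_axialPart lam).mono fun s hs ↦ hp.trans_le hs.1)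
    (fun s hs ↦ (hasDerivAt_axialPart lam (hmem s hs)).hasDerivWithinAt)
    (fun s hs ↦ (hasDerivAt_axialSlope lam (hmem s hs)).hasDerivWithinAt) fun s hs ↦ ?_
  rw [interior_Icc] at hs
  exact div_nonpos_of_nonpos_of_nonneg (sub_nonpos.2 (h s hs)) (by positivity)

lemma antitoneOn_axialPart (hu : u ≤ 1) (h : lam ≤ √(1 - u ^ 2)) :
    AntitoneOn (axialPart lam) (Ioc 0 u) := by
  refine antitoneOn_of_hasDerivWithinAt_nonpos (f' := axialSlope lam) (convex_Ioc 0 u)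
    ((continuousOn_axialPart lam).mono Ioc_subset_Ioi_self) ?_ ?_ <;>
    intro s hs <;> rw [interior_Ioc] at hs
  · exact (hasDerivAt_axialPart lam ⟨hs.1, hs.2.trans_le hu⟩).hasDerivWithinAt
  · have hw := h.trans (sqrt_one_sub_sq_anti hs.1.le hs.2.le)
    exact div_nonpos_of_nonpos_of_nonneg
      (mul_nonpos_of_nonneg_of_nonpos (Real.sqrt_nonneg _) (sub_nonpos.2 hw)) hs.1.le

lemma monotoneOn_axialPart (hu : 0 < u) (h : √(1 - u ^ 2) ≤ lam) :
    MonotoneOn (axialPart lam) (Icc u 1) := by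
  refine monotoneOn_of_hasDerivWithinAt_nonneg (f' := axialSlope lam) (convex_Icc u 1)
    ((continuousOn_axialPart lam).mono fun s hs ↦ hu.trans_le hs.1) ?_ ?_ <;>
    intro s hs <;> rw [interior_Icc] at hs
  · exact (hasDerivAt_axialPart lam ⟨hu.trans hs.1, hs.2⟩).hasDerivWithinAt
  · have hw := (sqrt_one_sub_sq_anti hu.le hs.1.le).trans h
    exact div_nonneg (mul_nonneg (Real.sqrt_nonneg _) (sub_nonneg.2 hw)) (hu.trans hs.1).le

end AxialPart

section Inflection

variable {lam u s p : ℝ}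

lemma sq_add_self_le_one {c : ℝ} (hc : c < 1) (h : c * (2 - c ^ 2) ≤ 1) : c ^ 2 + c ≤ 1 := by
  have hfactor : (1 - c) * (c ^ 2 + c - 1) ≤ 0 := by linarith
  linarith [nonpos_of_mul_nonpos_right hfactor (sub_pos.2 hc)]

lemma sqrt_one_sub_sq_mul_anti (hp : 0 < p) (hps : p ≤ s) (hs : s ≤ 1)
    (h : √(1 - p ^ 2) * (1 + p ^ 2) ≤ 1) :
    √(1 - s ^ 2) * (1 + s ^ 2) ≤ √(1 - p ^ 2) * (1 + p ^ 2) := by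
  have hwq := sqrt_one_sub_sq_anti hp.le hps
  have hq1 := sqrt_one_sub_sq_lt_one hp
  have hw0 := Real.sqrt_nonneg (1 - s ^ 2)
  have hq := Real.sq_sqrt (one_sub_sq_nonneg ⟨hp, hps.trans hs⟩)
  have hw := Real.sq_sqrt (one_sub_sq_nonneg ⟨hp.trans_le hps, hs⟩)
  generalize √(1 - s ^ 2) = w, √(1 - p ^ 2) = q at *
  rw [show s ^ 2 = 1 - w ^ 2 by linarith]
  rw [show p ^ 2 = 1 - q ^ 2 by linarith] at h ⊢
  have hgolden := sq_add_self_le_one hq1 (by linarith)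
  have hfactor : 0 ≤ 2 - q ^ 2 - q * w - w ^ 2 := by nlinarith
  linarith [mul_nonneg (sub_nonneg.2 hwq) hfactor]

lemma exists_inflection (h0 : 0 ≤ lam) (h1 : lam ≤ 1) (hu : u ∈ Ioc 0 1)
    (h : lam ≤ √(1 - u ^ 2) * (1 + u ^ 2)) :
    ∃ p ∈ Icc u 1, (∀ s ∈ Ioo 0 p, lam ≤ √(1 - s ^ 2) * (1 + s ^ 2)) ∧
      ∀ s ∈ Ioo p 1, √(1 - s ^ 2) * (1 + s ^ 2) ≤ lam := by
  have hcont : Continuous fun s : ℝ ↦ √(1 - s ^ 2) * (1 + s ^ 2) := by fun_prop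
  obtain ⟨p, hp, rfl⟩ := intermediate_value_Icc' hu.2 hcont.continuousOn
    (show lam ∈ _ from ⟨by simpa using h0, h⟩)
  refine ⟨p, hp, fun s hs ↦ ?_, fun s hs ↦ ?_⟩
  · rcases le_total (√(1 - s ^ 2) * (1 + s ^ 2)) 1 with hle | hge
    · exact sqrt_one_sub_sq_mul_anti hs.1 hs.2.le hp.2 hle
    · exact h1.trans hge
  · exact sqrt_one_sub_sq_mul_anti (hu.1.trans_le hp.1) hs.1.le hs.2.le h1

end Inflection

section Endpoint

variable {c lam u : ℝ}

lemma log_sqrt_one_sub_sq (hc : c ∈ Ico 0 1) :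
    Real.log √(1 - c ^ 2) = Real.log (1 + c) - Real.artanh c := by
  have hadd : 0 < 1 + c := by linarith [hc.1]
  have hsub : 0 < 1 - c := by linarith [hc.2]
  rw [Real.artanh_eq_half_log ⟨by linarith, hc.2.le⟩, Real.log_div hadd.ne' hsub.ne',
    Real.log_sqrt (by nlinarith), show 1 - c ^ 2 = (1 + c) * (1 - c) by ring,
    Real.log_mul hadd.ne' hsub.ne']
  ring

lemma artanh_le_div_sqrt_one_sub_sq (hc : c ∈ Ico 0 1) : Real.artanh c ≤ c / √(1 - c ^ 2) := by
  rw [← Real.sinh_artanh ⟨by linarith [hc.1], hc.2⟩]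
  exact Real.self_le_sinh_iff.2 (Real.artanh_nonneg hc.1)

lemma add_pow_three_div_three_le_artanh (hc : c ∈ Ico 0 1) : c + c ^ 3 / 3 ≤ Real.artanh c := by
  rw [Real.artanh_eq_half_log ⟨by linarith [hc.1], hc.2.le⟩]
  have h := Real.sum_range_le_log_div hc.1 hc.2 2
  convert h using 1
  norm_num [Finset.sum_range_succ]

lemma pow_four_div_le_artanh_add_log (hc : c ∈ Ico 0 1) :
    c ^ 4 / 32 ≤ c * Real.artanh c + Real.log √(1 - c ^ 2) - c ^ 2 / 2 := by
  let g : ℝ → ℝ := fun x ↦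
    (1 + x) * Real.log (1 + x) + (1 - x) * Real.log (1 - x) - x ^ 2 - x ^ 4 / 16
  have hderiv (x : ℝ) (hx : x ∈ Ico 0 1) :
      HasDerivAt g (2 * Real.artanh x - 2 * x - x ^ 3 / 4) x := by
    have hadd : 1 + x ≠ 0 := by linarith [hx.1]
    have hsub : 1 - x ≠ 0 := by linarith [hx.2]
    refine (((((Real.hasDerivAt_mul_log hadd).comp_const_add 1 x).add
      ((Real.hasDerivAt_mul_log hsub).comp_const_sub 1 x)).sub (hasDerivAt_pow 2 x)).sub
      ((hasDerivAt_pow 4 x).div_const 16)).congr_deriv ?_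
    rw [Real.artanh_eq_half_log ⟨by linarith [hx.1], hx.2.le⟩, Real.log_div hadd hsub]
    norm_num
    ring
  have hmono : MonotoneOn g (Ico 0 1) := by
    refine monotoneOn_of_hasDerivWithinAt_nonneg (convex_Ico 0 1)
      (fun x hx ↦ (hderiv x hx).continuousAt.continuousWithinAt)
      (fun x hx ↦ (hderiv x (interior_subset hx)).hasDerivWithinAt) fun x hx ↦ ?_
    have hx' := interior_subset hx
    have hcube := pow_nonneg hx'.1 3
    linarith [add_pow_three_div_three_le_artanh hx']
  have hg0 : g 0 = 0 := by simp [g]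
  have hg : g 0 ≤ g c := hmono ⟨le_rfl, one_pos⟩ hc hc.1
  have hsub : 0 < 1 - c := by linarith [hc.2]
  rw [log_sqrt_one_sub_sq hc, Real.artanh_eq_half_log ⟨by linarith [hc.1], hc.2.le⟩,
    Real.log_div (by linarith [hc.1]) hsub.ne']
  simp only [hg0, g] at hg
  linarith

lemma sqrt_le_of_le_mul_two_mul_sub {q R τ : ℝ} (hq : 0 ≤ q) (hτ : 0 < τ)
    (h : q ≤ τ * (2 * R - τ)) : √q ≤ R := by
  have hR : 0 ≤ 2 * R - τ := (mul_nonneg_iff_of_pos_left hτ).1 (hq.trans h)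
  exact Real.sqrt_le_iff.2 ⟨by linarith, by linarith [sq_nonneg (R - τ)]⟩

lemma sqrt_one_sub_div_one_add_le (hc : c ∈ Icc 0 1) :
    √((1 - c) / (1 + c)) ≤ 2 / (c + 2) - c / 4 - c ^ 2 / 4 - c ^ 3 / 32 := by
  obtain ⟨hc0, hc1⟩ := hc
  have hpoly : 0 ≤ 288 - 400 * c - 132 * c ^ 2 + 112 * c ^ 3 + 147 * c ^ 4 + 15 * c ^ 5 := by
    nlinarith [sq_nonneg (6 * c - 5), mul_nonneg hc0 (sq_nonneg (6 * c - 5)),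
      sq_nonneg (c * (6 * c - 5)), mul_nonneg hc0 (sq_nonneg (c * (6 * c - 5)))]
  -- `1 - 5 * c / 6` stays close enough to both sides, which nearly agree around `c = 4 / 5`.
  refine sqrt_le_of_le_mul_two_mul_sub (τ := 1 - 5 * c / 6)
    (div_nonneg (sub_nonneg.2 hc1) (by positivity)) (by linarith) ?_
  have hdiff : (1 - 5 * c / 6) * (2 * (2 / (c + 2) - c / 4 - c ^ 2 / 4 - c ^ 3 / 32)
      - (1 - 5 * c / 6)) - (1 - c) / (1 + c)
      = c * (288 - 400 * c - 132 * c ^ 2 + 112 * c ^ 3 + 147 * c ^ 4 + 15 * c ^ 5)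
        / (288 * (c + 2) * (1 + c)) := by
    field_simp
    ring
  rw [← sub_nonneg, hdiff]
  positivity

lemma mul_sqrt_add_le_log_one_add (hc : c ∈ Icc 0 1) :
    c * √((1 - c) / (1 + c)) + c ^ 2 / 4 + c ^ 3 / 4 + c ^ 4 / 32 ≤ Real.log (1 + c) := by
  have hsqrt := mul_le_mul_of_nonneg_left (sqrt_one_sub_div_one_add_le hc) hc.1
  have hlog := Real.le_log_one_add_of_nonneg hc.1
  rw [mul_comm 2 c, mul_div_assoc] at hlog
  linarith

lemma one_sub_mul_sub_artanh_le (hc : c ∈ Ico 0 1) :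
    (1 - c) * (c / √(1 - c ^ 2) - Real.artanh c - c ^ 2 / 4)
      ≤ c * Real.artanh c + Real.log √(1 - c ^ 2) - c ^ 2 / 2 - c ^ 4 / 32 := by
  have hsub : 0 < 1 - c := by linarith [hc.2]
  have hsqrt : √((1 - c) / (1 + c)) = (1 - c) / √(1 - c ^ 2) := by
    have hdiv : (1 - c) / (1 + c) = (1 - c) ^ 2 / (1 - c ^ 2) := by
      rw [show 1 - c ^ 2 = (1 + c) * (1 - c) by ring]
      field_simp
    rw [hdiv, Real.sqrt_div (sq_nonneg _), Real.sqrt_sq hsub.le]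
  have hlog := mul_sqrt_add_le_log_one_add ⟨hc.1, hc.2.le⟩
  rw [hsqrt] at hlog
  rw [log_sqrt_one_sub_sq hc]
  linear_combination hlog

lemma sq_div_two_sub_mul_artanh_add_nonneg {m : ℝ} (hc : c ∈ Ico 0 1) (hm : m ≤ 1 - c) :
    0 ≤ m ^ 2 / 2 - m * (c / √(1 - c ^ 2) - Real.artanh c)
      + (c * Real.artanh c + Real.log √(1 - c ^ 2) - c ^ 2 / 2) := by
  have hP := sub_nonneg.2 (artanh_le_div_sqrt_one_sub_sq hc)
  have hQ := pow_four_div_le_artanh_add_log hc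
  have hPQ := one_sub_mul_sub_artanh_le hc
  have hsub : 0 < 1 - c := by linarith [hc.2]
  generalize c / √(1 - c ^ 2) - Real.artanh c = P,
    c * Real.artanh c + Real.log √(1 - c ^ 2) - c ^ 2 / 2 = Q at *
  rcases le_total m 0 with hm0 | hm0
  · nlinarith [sq_nonneg m, pow_nonneg hc.1 4, mul_nonneg (neg_nonneg.2 hm0) hP]
  -- Replacing `m ^ 2 / 2` by its tangent at `m = c ^ 2 / 4` leaves an affine function of `m`, so it
  -- suffices to consider `m = 0` and `m = 1 - c`.
  have haffine : 0 ≤ m * (c ^ 2 / 4 - P) + (Q - c ^ 4 / 32) := by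
    refine (mul_nonneg_iff_of_pos_left hsub).1 ?_
    nlinarith [mul_le_mul_of_nonneg_left hPQ hm0,
      mul_nonneg (sub_nonneg.2 hm) (sub_nonneg.2 hQ)]
  nlinarith [sq_nonneg (m - c ^ 2 / 4)]

lemma descentGap_one_eq (lam : ℝ) (hu : u ∈ Ioc 0 1) :
    descentGap lam u 1 = (lam - √(1 - u ^ 2)) ^ 2 / 2
      - (lam - √(1 - u ^ 2)) * (√(1 - u ^ 2) / u - Real.artanh √(1 - u ^ 2))
      + (√(1 - u ^ 2) * Real.artanh √(1 - u ^ 2) + Real.log u - √(1 - u ^ 2) ^ 2 / 2) := by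
  have hlog := log_sqrt_one_sub_sq ⟨Real.sqrt_nonneg _, sqrt_one_sub_sq_lt_one hu.1⟩
  have hsq := Real.sq_sqrt (one_sub_sq_nonneg hu)
  rw [hsq, sub_sub_cancel, Real.sqrt_sq hu.1.le] at hlog
  have hone : axialPart lam 1 = 1 / 2 := by norm_num [axialPart]
  have hu0 := hu.1.ne'
  rw [descentGap, hone, axialPart, axialSlope]
  generalize √(1 - u ^ 2) = c at *
  rw [hlog]
  field_simp
  linear_combination -u * hsq

lemma descentGap_one_nonneg (h1 : lam ≤ 1) (hu : u ∈ Ioc 0 1) : 0 ≤ descentGap lam u 1 := by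
  have h := sq_div_two_sub_mul_artanh_add_nonneg (m := lam - √(1 - u ^ 2))
    ⟨Real.sqrt_nonneg _, sqrt_one_sub_sq_lt_one hu.1⟩ (by linarith)
  rw [Real.sq_sqrt (one_sub_sq_nonneg hu), sub_sub_cancel, Real.sqrt_sq hu.1.le] at h
  rw [descentGap_one_eq lam hu, Real.sq_sqrt (one_sub_sq_nonneg hu)]
  exact h

end Endpoint

section DescentGap

variable {lam u s : ℝ}

lemma descentGap_nonneg_of_lt (h0 : 0 ≤ lam) (h1 : lam ≤ 1) (hu : u ∈ Ioc 0 1) (hs : s ∈ Ioc 0 1)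
    (h : lam < √(1 - u ^ 2) * (1 + u ^ 2)) : 0 ≤ descentGap lam u s := by
  have hu1 : u < 1 := by
    refine hu.2.lt_of_ne fun hu1 ↦ ?_
    exact h.not_ge (by simpa [hu1] using h0)
  obtain ⟨p, hp, hconv, hconc⟩ := exists_inflection h0 h1 hu h.le
  replace hconv := convexOn_axialPart hp.2 hconv
  replace hconc := concaveOn_axialPart (hu.1.trans_le hp.1) hconc
  have hderiv := hasDerivAt_axialPart lam ⟨hu.1, hu1⟩
  have hup : u ∈ Ioc 0 p := ⟨hu.1, hp.1⟩
  rcases le_total s p with hsp | hps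
  · have htangent := add_mul_sub_le_of_convexOn hconv hup ⟨hs.1, hsp⟩ hderiv
    exact add_nonneg (by positivity) (by linarith)
  · have hmin := min_zero_le_of_convexOn_of_concaveOn hconv hconc
      ⟨hu.1.trans_le hp.1, le_rfl⟩ hup hderiv ⟨hps, hs.2⟩
    have hone := descentGap_one_nonneg h1 hu
    unfold descentGap at hone ⊢
    rcases min_le_iff.1 hmin with hle | hle
    · exact add_nonneg (by positivity) hle
    · linarith

lemma two_mul_one_sub_le_pow_three (hu : u ∈ Ioc 0 1) (h : √(1 - u ^ 2) * (1 + u ^ 2) ≤ 1) :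
    2 * (1 - u) ≤ u ^ 3 := by
  have hsq := Real.sq_sqrt (one_sub_sq_nonneg hu)
  have hc0 := Real.sqrt_nonneg (1 - u ^ 2)
  have hc1 := sqrt_one_sub_sq_lt_one hu.1
  have hgolden := sq_add_self_le_one hc1 (by rwa [hsq, show 2 - (1 - u ^ 2) = 1 + u ^ 2 by ring])
  have hquartic : 1 ≤ u ^ 4 + u ^ 2 := by nlinarith
  have hu34 : 3 / 4 ≤ u := by
    by_contra! hlt
    nlinarith [hu.1, pow_lt_pow_left₀ hlt hu.1.le two_ne_zero]
  nlinarith [hu.2]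

lemma descentGap_nonneg_of_ge (h1 : lam ≤ 1) (hu : 0 < u) (hus : u ≤ s) (hs : s ≤ 1)
    (h : √(1 - u ^ 2) * (1 + u ^ 2) ≤ lam) : 0 ≤ descentGap lam u s := by
  have hu1 := hus.trans hs
  have hc0 := Real.sqrt_nonneg (1 - u ^ 2)
  have hm : √(1 - u ^ 2) * u ^ 2 ≤ lam - √(1 - u ^ 2) := by linarith
  have hm0 : 0 ≤ lam - √(1 - u ^ 2) := le_trans (by positivity) hm
  have hmono := monotoneOn_axialPart hu (sub_nonneg.1 hm0) ⟨le_rfl, hu1⟩ ⟨hus, hs⟩ hus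
  have hcube := two_mul_one_sub_le_pow_three ⟨hu, hu1⟩ (h.trans h1)
  suffices hslope : axialSlope lam u * (s - u) ≤ (lam - √(1 - u ^ 2)) ^ 2 / 2 by
    unfold descentGap
    linarith
  unfold axialSlope
  generalize √(1 - u ^ 2) = c at *
  calc c * (lam - c) / u * (s - u) ≤ c * (lam - c) / u * (1 - u) := by gcongr
    _ ≤ c * (lam - c) / u * (u ^ 3 / 2) := by gcongr; linarith
    _ = (lam - c) * (c * u ^ 2) / 2 := by field_simp
    _ ≤ (lam - c) * (lam - c) / 2 := by gcongr
    _ = (lam - c) ^ 2 / 2 := by ring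

lemma axialSlope_le (h1 : lam ≤ 1) (hs : 0 < s) (hsu : s ≤ u) (hu : u ≤ 1)
    (h : √(1 - u ^ 2) ≤ lam) :
    axialSlope lam s ≤ (lam - √(1 - u ^ 2)) / (1 - √(1 - u ^ 2)) * (s / 2) := by
  have hcw := sqrt_one_sub_sq_anti hs.le hsu
  have hc1 : 0 < 1 - √(1 - u ^ 2) := sub_pos.2 (sqrt_one_sub_sq_lt_one (hs.trans_le hsu))
  have hw1 := sqrt_one_sub_sq_lt_one hs
  have hw0 := Real.sqrt_nonneg (1 - s ^ 2)
  have hsq := Real.sq_sqrt (one_sub_sq_nonneg ⟨hs, hsu.trans hu⟩)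
  unfold axialSlope
  generalize √(1 - u ^ 2) = c, √(1 - s ^ 2) = w at *
  have hratio : (lam - w) * (1 - c) ≤ (lam - c) * (1 - w) := by
    linarith [mul_nonneg (sub_nonneg.2 hcw) (sub_nonneg.2 h1)]
  rw [div_mul_div_comm, div_le_div_iff₀ hs (by positivity)]
  calc w * (lam - w) * ((1 - c) * 2) = 2 * w * ((lam - w) * (1 - c)) := by ring
    _ ≤ 2 * w * ((lam - c) * (1 - w)) := by gcongr
    _ ≤ (1 + w) * ((lam - c) * (1 - w)) := by
      gcongr
      linarith
    _ = (lam - c) * s * s := by linear_combination (c - lam) * hsq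

lemma axialPart_sub_le (h1 : lam ≤ 1) (hs : 0 < s) (hsu : s ≤ u) (hu : u ≤ 1)
    (h : √(1 - u ^ 2) ≤ lam) :
    axialPart lam u - axialPart lam s
      ≤ (lam - √(1 - u ^ 2)) / (1 - √(1 - u ^ 2)) * ((u ^ 2 - s ^ 2) / 4) := by
  set K := (lam - √(1 - u ^ 2)) / (1 - √(1 - u ^ 2))
  have hmono : MonotoneOn (fun t ↦ K * (t ^ 2 / 4) - axialPart lam t) (Icc s u) := by
    refine monotoneOn_of_hasDerivWithinAt_nonneg
      (f' := fun t ↦ K * (t / 2) - axialSlope lam t) (convex_Icc s u)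
      (ContinuousOn.sub (by fun_prop)
        ((continuousOn_axialPart lam).mono fun t ht ↦ hs.trans_le ht.1)) ?_ ?_ <;>
      intro t ht <;> rw [interior_Icc] at ht
    · refine HasDerivAt.hasDerivWithinAt (HasDerivAt.sub ?_
        (hasDerivAt_axialPart lam ⟨hs.trans ht.1, ht.2.trans_le hu⟩))
      refine (((hasDerivAt_pow 2 t).div_const 4).const_mul K).congr_deriv ?_
      push_cast
      ring
    · exact sub_nonneg.2 (axialSlope_le h1 (hs.trans ht.1) ht.2.le hu h)
  have hle := hmono ⟨le_rfl, hsu⟩ ⟨hsu, le_rfl⟩ hsu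
  dsimp only at hle
  linarith

lemma descentGap_nonneg_of_le_of_sqrt_le (h1 : lam ≤ 1) (hs : 0 < s) (hsu : s ≤ u) (hu : u ≤ 1)
    (hcl : √(1 - u ^ 2) ≤ lam) (hwl : √(1 - s ^ 2) ≤ lam) : 0 ≤ descentGap lam u s := by
  have hu0 := hs.trans_le hsu
  have hpart := axialPart_sub_le h1 hs hsu hu hcl
  have hc0 := Real.sqrt_nonneg (1 - u ^ 2)
  have hc1 : 0 < 1 - √(1 - u ^ 2) := sub_pos.2 (sqrt_one_sub_sq_lt_one hu0)
  have hsq := Real.sq_sqrt (one_sub_sq_nonneg ⟨hu0, hu⟩)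
  have hwsq := Real.sqrt_le_iff.1 hwl
  unfold descentGap axialSlope
  generalize √(1 - u ^ 2) = c at *
  have hm : 0 ≤ lam - c := sub_nonneg.2 hcl
  have hslope : c * (lam - c) / u * (s - u) ≤ -(c * (lam - c) * (u ^ 2 - s ^ 2) / (2 * u ^ 2)) := by
    rw [← sub_nonneg, show -(c * (lam - c) * (u ^ 2 - s ^ 2) / (2 * u ^ 2))
      - c * (lam - c) / u * (s - u) = c * (lam - c) * (u - s) ^ 2 / (2 * u ^ 2) by
        field_simp; ring]
    positivity
  have hcombine : (lam - c) / (1 - c) * ((u ^ 2 - s ^ 2) / 4)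
      - c * (lam - c) * (u ^ 2 - s ^ 2) / (2 * u ^ 2)
      = (lam - c) * (u ^ 2 - s ^ 2) / (4 * (1 + c)) := by
    rw [show u ^ 2 = (1 - c) * (1 + c) by linarith]
    field_simp
    ring
  have hbound : (lam - c) * (u ^ 2 - s ^ 2) / (4 * (1 + c)) ≤ (lam - c) ^ 2 / 4 := by
    rw [div_le_div_iff₀ (by positivity) (by positivity)]
    nlinarith [mul_le_mul_of_nonneg_left
      (show u ^ 2 - s ^ 2 ≤ (lam - c) * (1 + c) by nlinarith) hm]
  linarith [sq_nonneg (lam - c)]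

lemma descentGap_nonneg_of_le (h1 : lam ≤ 1) (hs : 0 < s) (hsu : s ≤ u) (hu : u ≤ 1)
    (h : √(1 - u ^ 2) ≤ lam) : 0 ≤ descentGap lam u s := by
  rcases le_total (√(1 - s ^ 2)) lam with hwl | hlw
  · exact descentGap_nonneg_of_le_of_sqrt_le h1 hs hsu hu h hwl
  -- `axialPart lam` is minimal at `√(1 - lam ^ 2)`, which lies between `s` and `u`.
  have h0 : 0 ≤ lam := (Real.sqrt_nonneg _).trans h
  have hs₀s : s ≤ √(1 - lam ^ 2) :=
    Real.le_sqrt_of_sq_le (by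
      linarith [(Real.le_sqrt h0 (one_sub_sq_nonneg ⟨hs, hsu.trans hu⟩)).1 hlw])
  have hs₀u : √(1 - lam ^ 2) ≤ u :=
    Real.sqrt_le_iff.2 ⟨hs.le.trans hsu, by linarith [(Real.sqrt_le_iff.1 h).2]⟩
  have hw₀ : √(1 - √(1 - lam ^ 2) ^ 2) = lam := by
    rw [Real.sq_sqrt (by nlinarith), sub_sub_cancel, Real.sqrt_sq h0]
  generalize √(1 - lam ^ 2) = s₀ at *
  have hgap := descentGap_nonneg_of_le_of_sqrt_le h1 (hs.trans_le hs₀s) hs₀u hu h hw₀.le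
  have hanti := antitoneOn_axialPart (hs₀u.trans hu) hw₀.ge ⟨hs, hs₀s⟩
    ⟨hs.trans_le hs₀s, le_rfl⟩ hs₀s
  have hslope : 0 ≤ axialSlope lam u :=
    div_nonneg (mul_nonneg (Real.sqrt_nonneg _) (sub_nonneg.2 h)) (hs.le.trans hsu)
  unfold descentGap at hgap ⊢
  nlinarith [mul_nonneg hslope (sub_nonneg.2 hs₀s)]

theorem descentGap_nonneg (h0 : 0 ≤ lam) (h1 : lam ≤ 1) (hu : u ∈ Ioc 0 1) (hs : s ∈ Ioc 0 1) :
    0 ≤ descentGap lam u s := by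
  rcases lt_or_ge lam (√(1 - u ^ 2) * (1 + u ^ 2)) with h | h
  · exact descentGap_nonneg_of_lt h0 h1 hu hs h
  rcases le_total u s with hus | hsu
  · exact descentGap_nonneg_of_ge h1 hu.1 hus hs.2 h
  · refine descentGap_nonneg_of_le h1 hs.1 hsu hu.2 (le_trans ?_ h)
    exact le_mul_of_one_le_right (Real.sqrt_nonneg _) (by nlinarith [sq_nonneg u])

end DescentGap

section Euclidean

variable {d : ℕ}

lemma norm_e (j : Fin (d + 2)) : ‖e d j‖ = 1 := by simp [e]

lemma inner_e (j : Fin (d + 2)) (x : Euc d) : inner ℝ x (e d j) = x j := by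
  simp [e, EuclideanSpace.inner_single_right]

lemma sq_zero_add_sq_one_le_norm_sq (x : Euc d) : x 0 ^ 2 + x 1 ^ 2 ≤ ‖x‖ ^ 2 := by
  rw [EuclideanSpace.real_norm_sq_eq, Fin.sum_univ_succ, Fin.sum_univ_succ, ← add_assoc]
  exact le_add_of_nonneg_right (Finset.sum_nonneg fun i _ ↦ sq_nonneg _)

lemma norm_sub_smul_e_one_sq (lam : ℝ) (x : Euc d) :
    ‖x - lam • e d 1‖ ^ 2 = ‖x‖ ^ 2 - 2 * lam * x 1 + lam ^ 2 := by
  rw [norm_sub_sq_real, inner_smul_right, inner_e, norm_smul, norm_e, mul_one, Real.norm_eq_abs,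
    sq_abs]
  ring

lemma DR_sub_smul_e_one (lam : ℝ) (x : Euc d) :
    DR d lam x - lam • e d 1 = (1 - 1 / ‖x‖) • x + ((2 / ‖x‖ - 1) * x 0) • e d 0 := by
  ext j
  simp only [DR, e, PiLp.sub_apply, PiLp.add_apply, PiLp.smul_apply, WithLp.ofLp_sum,
    Finset.sum_apply, PiLp.single_apply, smul_eq_mul, mul_ite, mul_one, mul_zero,
    Finset.sum_ite_eq, Finset.mem_filter, Finset.mem_univ, true_and]
  match j with
  | 0 =>
    simp only [↓reduceIte, zero_ne_one, add_zero, Fin.coe_ofNat_eq_mod, Nat.zero_mod,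
      nonpos_iff_eq_zero, OfNat.ofNat_ne_zero, sub_zero]
    ring
  | 1 => simp
  | ⟨k + 2, hk⟩ => simp [Fin.ext_iff]

lemma DR_apply_zero (lam : ℝ) (x : Euc d) : DR d lam x 0 = x 0 / ‖x‖ := by
  have h := congrArg (· 0) (DR_sub_smul_e_one lam x)
  simp only [e, PiLp.sub_apply, PiLp.smul_apply, ne_eq, zero_ne_one, not_false_eq_true,
    PiLp.single_eq_of_ne, smul_eq_mul, mul_zero, sub_zero, PiLp.add_apply, PiLp.single_eq_same,
    mul_one] at h
  linear_combination h

lemma norm_DR_sub_smul_e_one_sq (lam : ℝ) {x : Euc d} (hx : x ≠ 0) :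
    ‖DR d lam x - lam • e d 1‖ ^ 2
      = (x 0 / ‖x‖) ^ 2 + (‖x‖ - 1) ^ 2 * (1 - (x 0 / ‖x‖) ^ 2) := by
  rw [DR_sub_smul_e_one, norm_add_sq_real, inner_smul_right, real_inner_smul_left, inner_e,
    norm_smul, norm_smul, norm_e, mul_pow, mul_pow, Real.norm_eq_abs, Real.norm_eq_abs, sq_abs,
    sq_abs]
  field_simp
  ring

lemma F_eq_axialPart (lam : ℝ) (x : Euc d) :
    F d lam x = (‖x - lam • e d 1‖ ^ 2 - x 0 ^ 2) / 2 + axialPart lam (x 0) := by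
  unfold F axialPart
  ring

lemma ne_zero_of_mem_Delta {x : Euc d} (hx : x ∈ Delta d) : x ≠ 0 := by
  rintro rfl
  exact lt_irrefl 0 hx.1

lemma div_norm_mem_Ioc_of_mem_Delta {x : Euc d} (hx : x ∈ Delta d) : x 0 / ‖x‖ ∈ Ioc 0 1 := by
  have hnorm := norm_pos_iff.2 (ne_zero_of_mem_Delta hx)
  refine ⟨div_pos hx.1 hnorm, (div_le_one hnorm).2 ?_⟩
  exact (le_abs_self _).trans (PiLp.norm_apply_le x 0)

lemma norm_mul_sqrt_sq {x : Euc d} (hx : x ∈ Delta d) :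
    (‖x‖ * √(1 - (x 0 / ‖x‖) ^ 2)) ^ 2 = ‖x‖ ^ 2 - x 0 ^ 2 := by
  have hnorm := norm_ne_zero_iff.2 (ne_zero_of_mem_Delta hx)
  rw [mul_pow, Real.sq_sqrt (one_sub_sq_nonneg (div_norm_mem_Ioc_of_mem_Delta hx)), mul_sub,
    mul_one, ← mul_pow, mul_div_cancel₀ _ hnorm]

lemma apply_one_le_norm_mul_sqrt {x : Euc d} (hx : x ∈ Delta d) :
    x 1 ≤ ‖x‖ * √(1 - (x 0 / ‖x‖) ^ 2) := by
  refine le_of_sq_le_sq ?_ (by positivity)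
  linarith [norm_mul_sqrt_sq hx, sq_zero_add_sq_one_le_norm_sq x]

lemma descentGap_le_F_sub_F_DR {lam : ℝ} (h0 : 0 ≤ lam) {x : Euc d} (hx : x ∈ Delta d) :
    descentGap lam (x 0 / ‖x‖) (x 0) ≤ F d lam x - F d lam (DR d lam x) := by
  have hx0 := ne_zero_of_mem_Delta hx
  have hu := div_norm_mem_Ioc_of_mem_Delta hx
  have hx1 := mul_le_mul_of_nonneg_left (apply_one_le_norm_mul_sqrt hx) h0
  have hslope : axialSlope lam (x 0 / ‖x‖) * (x 0 - x 0 / ‖x‖)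
      = √(1 - (x 0 / ‖x‖) ^ 2) * (lam - √(1 - (x 0 / ‖x‖) ^ 2)) * (‖x‖ - 1) := by
    have hpos := hx.1.ne'
    unfold axialSlope
    generalize √(1 - (x 0 / ‖x‖) ^ 2) = c
    field_simp
  rw [descentGap, hslope, F_eq_axialPart, F_eq_axialPart, norm_sub_smul_e_one_sq,
    norm_DR_sub_smul_e_one_sq lam hx0, DR_apply_zero]
  linear_combination hx1 + norm_mul_sqrt_sq hx / 2
    - (‖x‖ - 1) ^ 2 / 2 * Real.sq_sqrt (one_sub_sq_nonneg hu)

end Euclidean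

/-- For `λ ∈ [0,1)`, `F(T x) ≤ F(x)` for every `x ∈ Δ`
(note `T x ∈ Δ` whenever `x ∈ Δ`). -/
theorem stmt4 (d : ℕ) (lam : ℝ) (h0 : 0 ≤ lam) (h1 : lam < 1) :
    ∀ x ∈ Delta d, F d lam (DR d lam x) ≤ F d lam x := by
  intro x hx
  have hgap := descentGap_nonneg h0 h1.le (div_norm_mem_Ioc_of_mem_Delta hx) hx
  exact sub_nonneg.1 (hgap.trans (descentGap_le_F_sub_F_DR h0 hx))
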